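/- The 3-dissection (q^2;q^2)_∞^2/((q;q^2)_∞^2 (q^6;q^6)_∞) = M0(q^3) + q M1(q^3) + q^2 M2(q^3) holds, where M0(q) = (-q;q)_∞ (q^3;q^3)_∞^2 / ((q;q)_∞ (-q^3;q^3)_∞^2), M1(q) = 2 (q^3;q^3)_∞ (q^6;q^6)_∞ / (q;q)_∞, and M2(q) = (q^6;q^6)_∞^4 / ((q^2;q^2)_∞ (q^3;q^3)_∞^2). -/

import Mathlib

/-- The infinite q-Pochhammer symbol `(a; q)_∞ = ∏_{j ≥ 0} (1 - a q^j)`. -/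
noncomputable def qPochInf (a q : ℂ) : ℂ := ∏' j : ℕ, (1 - a * q ^ j)

/-- The finite q-Pochhammer symbol `(a; q)_n = ∏_{j = 0}^{n-1} (1 - a q^j)`. -/
noncomputable def qPoch (a q : ℂ) (n : ℕ) : ℂ := ∏ j ∈ Finset.range n, (1 - a * q ^ j)

noncomputable def M2bar0 (q : ℂ) : ℂ :=
  qPochInf (-q) q * qPochInf (q ^ 3) (q ^ 3) ^ 2 /
    (qPochInf q q * qPochInf (-q ^ 3) (q ^ 3) ^ 2)

noncomputable def M2bar1 (q : ℂ) : ℂ :=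
  2 * (qPochInf (q ^ 3) (q ^ 3) * qPochInf (q ^ 6) (q ^ 6)) / qPochInf q q

noncomputable def M2bar2 (q : ℂ) : ℂ :=
  qPochInf (q ^ 6) (q ^ 6) ^ 4 /
    (qPochInf (q ^ 2) (q ^ 2) * qPochInf (q ^ 3) (q ^ 3) ^ 2)

/-!
With `ψ(q) = ∑_{n ≥ 0} q^{n(n+1)/2}`, the left side is `ψ(q)² / (q⁶; q⁶)_∞`. The triangular number
of index `1 + 3n` is `1 + 9 n(n+1)/2`, while those of index `≡ 0, 2 mod 3` are three times the
generalised pentagonal numbers, so `ψ(q) = P(q³) + q ψ(q⁹)` where `P(q) = ∑_{j ∈ ℤ} q^{j(3j+1)/2}`.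
Squaring gives the three terms `P²`, `2Pψ`, `ψ²`, and the Jacobi triple product writes `P` and `ψ`
as quotients of `q`-Pochhammer symbols.
-/

open Filter Topology

section NormLtOne

lemma norm_pow_lt_one {R : Type*} [SeminormedRing R] {q : R} (hq : ‖q‖ < 1) {n : ℕ}
    (hn : n ≠ 0) : ‖q ^ n‖ < 1 :=
  (norm_pow_le' q (Nat.pos_of_ne_zero hn)).trans_lt (pow_lt_one₀ (norm_nonneg q) hq hn)

lemma one_sub_pow_ne_zero {R : Type*} [NormedRing R] [HasSummableGeomSeries R] [Nontrivial R]
    {q : R} (hq : ‖q‖ < 1) {n : ℕ} (hn : n ≠ 0) : 1 - q ^ n ≠ 0 :=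
  (isUnit_one_sub_of_norm_lt_one (norm_pow_lt_one hq hn)).ne_zero

variable {𝕜 : Type*} [NormedField 𝕜] {q : 𝕜}

lemma summable_norm_neg_mul_pow (a : 𝕜) (hq : ‖q‖ < 1) :
    Summable fun j : ℕ ↦ ‖-(a * q ^ j)‖ := by
  simpa only [norm_neg, norm_mul, norm_pow] using
    (summable_geometric_of_lt_one (norm_nonneg q) hq).mul_left ‖a‖

lemma multipliable_one_sub_mul_pow [CompleteSpace 𝕜] (a : 𝕜) (hq : ‖q‖ < 1) :
    Multipliable fun j : ℕ ↦ 1 - a * q ^ j := by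
  simpa only [sub_eq_add_neg] using
    multipliable_one_add_of_summable (summable_norm_neg_mul_pow a hq)

end NormLtOne

section QPochhammer

variable {q : ℂ}

lemma qPoch_succ (a q : ℂ) (n : ℕ) : qPoch a q (n + 1) = qPoch a q n * (1 - a * q ^ n) :=
  Finset.prod_range_succ _ n

lemma qPoch_self_succ (q : ℂ) (n : ℕ) : qPoch q q (n + 1) = qPoch q q n * (1 - q ^ (n + 1)) := by
  rw [qPoch_succ, pow_succ']

lemma qPoch_self_ne_zero (hq : ‖q‖ < 1) (n : ℕ) : qPoch q q n ≠ 0 :=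
  Finset.prod_ne_zero_iff.2 fun j _ ↦ by
    simpa only [pow_succ'] using one_sub_pow_ne_zero hq j.succ_ne_zero

lemma tendsto_qPoch (a : ℂ) (hq : ‖q‖ < 1) :
    Tendsto (qPoch a q) atTop (𝓝 (qPochInf a q)) :=
  (multipliable_one_sub_mul_pow a hq).hasProd.tendsto_prod_nat

lemma qPochInf_self_ne_zero (hq : ‖q‖ < 1) : qPochInf q q ≠ 0 := by
  simp only [qPochInf, sub_eq_add_neg]
  refine tprod_one_add_ne_zero_of_summable (fun j ↦ ?_) (summable_norm_neg_mul_pow q hq)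
  simpa only [pow_succ', sub_eq_add_neg] using one_sub_pow_ne_zero hq j.succ_ne_zero

lemma qPochInf_pow_self_ne_zero (hq : ‖q‖ < 1) {n : ℕ} (hn : n ≠ 0) :
    qPochInf (q ^ n) (q ^ n) ≠ 0 :=
  qPochInf_self_ne_zero (norm_pow_lt_one hq hn)

lemma qPochInf_eq_one_sub_mul (a : ℂ) (hq : ‖q‖ < 1) :
    qPochInf a q = (1 - a) * qPochInf (a * q) q := by
  have hshift (j : ℕ) : 1 - a * q ^ (j + 1) = 1 - a * q * q ^ j := by ring
  rw [qPochInf, tprod_eq_zero_mul' ((multipliable_one_sub_mul_pow (a * q) hq).congr fun j ↦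
    (hshift j).symm), pow_zero, mul_one, qPochInf, tprod_congr hshift]

lemma qPochInf_neg_mul_self (a : ℂ) (hq : ‖q‖ < 1) :
    qPochInf (-a) q * qPochInf a q = qPochInf (a ^ 2) (q ^ 2) := by
  unfold qPochInf
  rw [← (multipliable_one_sub_mul_pow (-a) hq).tprod_mul (multipliable_one_sub_mul_pow a hq)]
  congr! 2 with j
  ring

lemma qPoch_mul_eq_prod (a q : ℂ) (m n : ℕ) :
    qPoch a q (m * n) = ∏ i ∈ Finset.range m, qPoch (a * q ^ i) (q ^ m) n := by
  induction n with
  | zero => simp [qPoch]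
  | succ n ih =>
    simp only [qPoch_succ, Finset.prod_mul_distrib]
    rw [← ih, qPoch, qPoch, mul_add_one, Finset.prod_range_add]
    congr! 2 with i
    ring

lemma qPochInf_eq_prod (a : ℂ) (hq : ‖q‖ < 1) {m : ℕ} (hm : m ≠ 0) :
    qPochInf a q = ∏ i ∈ Finset.range m, qPochInf (a * q ^ i) (q ^ m) := by
  have hfactors : Tendsto (fun n ↦ ∏ i ∈ Finset.range m, qPoch (a * q ^ i) (q ^ m) n) atTop
      (𝓝 (∏ i ∈ Finset.range m, qPochInf (a * q ^ i) (q ^ m))) :=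
    tendsto_finsetProd _ fun i _ ↦ tendsto_qPoch _ (norm_pow_lt_one hq hm)
  simp only [← qPoch_mul_eq_prod] at hfactors
  exact tendsto_nhds_unique
    ((tendsto_qPoch a hq).comp (tendsto_id.const_mul_atTop' (Nat.pos_of_ne_zero hm))) hfactors

end QPochhammer

section InvQFactorial

variable {q : ℂ}

/-- The reciprocal `1 / (q; q)_k`, set to `0` for `k < 0`, so that `invQFactorial_sub_one` holds for
all integers `k` and sums over `k` need no boundary terms. -/
noncomputable def invQFactorial (q : ℂ) (k : ℤ) : ℂ := if k < 0 then 0 else (qPoch q q k.toNat)⁻¹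

lemma invQFactorial_of_neg (q : ℂ) {k : ℤ} (hk : k < 0) : invQFactorial q k = 0 := if_pos hk

lemma invQFactorial_natCast (q : ℂ) (n : ℕ) : invQFactorial q n = (qPoch q q n)⁻¹ := by
  simp [invQFactorial]

lemma invQFactorial_sub_one (hq : ‖q‖ < 1) (k : ℤ) :
    invQFactorial q (k - 1) = (1 - q ^ k) * invQFactorial q k := by
  rcases lt_trichotomy k 0 with hk | rfl | hk
  · rw [invQFactorial_of_neg q hk, invQFactorial_of_neg q (by lia), mul_zero]
  · rw [invQFactorial_of_neg q (by lia), zpow_zero, sub_self, zero_mul]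
  · obtain ⟨n, rfl⟩ : ∃ n : ℕ, k = (n + 1 : ℕ) := ⟨(k - 1).toNat, by lia⟩
    rw [invQFactorial_natCast, zpow_natCast, Nat.cast_succ, add_sub_cancel_right,
      invQFactorial_natCast, qPoch_self_succ]
    have := qPoch_self_ne_zero hq n
    have := one_sub_pow_ne_zero hq n.succ_ne_zero
    field_simp

lemma tendsto_invQFactorial (hq : ‖q‖ < 1) :
    Tendsto (invQFactorial q) atTop (𝓝 (qPochInf q q)⁻¹) := by
  rw [← Nat.map_cast_int_atTop, tendsto_map'_iff]
  exact ((tendsto_qPoch q hq).inv₀ (qPochInf_self_ne_zero hq)).congr fun n ↦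
    (invQFactorial_natCast q n).symm

lemma exists_norm_invQFactorial_le (hq : ‖q‖ < 1) : ∃ C, ∀ k, ‖invQFactorial q k‖ ≤ C := by
  obtain ⟨C, hC⟩ :=
    ((tendsto_qPoch q hq).inv₀ (qPochInf_self_ne_zero hq)).norm.bddAbove_range
  have hC' (n : ℕ) : ‖(qPoch q q n)⁻¹‖ ≤ C := hC ⟨n, rfl⟩
  refine ⟨C, fun k ↦ ?_⟩
  unfold invQFactorial
  split_ifs
  · exact norm_zero.trans_le ((norm_nonneg _).trans (hC' 0))
  · exact hC' k.toNat

end InvQFactorial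

section Triangular

/-- The triangular number `j (j + 1) / 2` of an integer index; the division is exact. -/
def triangular (j : ℤ) : ℤ := j * (j + 1) / 2

lemma two_mul_triangular (j : ℤ) : 2 * triangular j = j * (j + 1) :=
  Int.mul_ediv_cancel' j.two_dvd_mul_add_one

lemma triangular_add_one (j : ℤ) : triangular (j + 1) = triangular j + (j + 1) := by
  linarith [two_mul_triangular j, two_mul_triangular (j + 1)]

lemma triangular_neg_add_one (j : ℤ) : triangular (-(j + 1)) = triangular j := by
  linarith [two_mul_triangular j, two_mul_triangular (-(j + 1))]

lemma triangular_three_mul (j : ℤ) : triangular (3 * j) = 3 * (3 * triangular j - j) := by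
  linarith [two_mul_triangular j, two_mul_triangular (3 * j)]

lemma triangular_one_add_three_mul (j : ℤ) : triangular (1 + 3 * j) = 1 + 9 * triangular j := by
  linarith [two_mul_triangular j, two_mul_triangular (1 + 3 * j)]

lemma triangular_two_add_three_mul (j : ℤ) :
    triangular (2 + 3 * j) = 3 * (3 * triangular (-(j + 1)) - -(j + 1)) := by
  linarith [two_mul_triangular (-(j + 1)), two_mul_triangular (2 + 3 * j)]

end Triangular

section TriangularSeries

variable {𝕜 : Type*} [NormedField 𝕜] {q : 𝕜}

lemma summable_norm_zpow_triangular_mul_pow (hq : ‖q‖ < 1) (hq0 : q ≠ 0) (x : 𝕜) :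
    Summable fun n : ℕ ↦ ‖q ^ triangular n * x ^ n‖ := by
  have hratio : Tendsto (fun n : ℕ ↦ ‖q ^ (n + 1) * x‖) atTop (𝓝 0) := by
    simpa using (((tendsto_pow_atTop_nhds_zero_of_norm_lt_one hq).comp
      (tendsto_add_atTop_nat 1)).mul_const x).norm
  refine summable_of_ratio_norm_eventually_le (r := 1 / 2) (by norm_num) ?_
  filter_upwards [hratio.eventually_le_const one_half_pos] with n hn
  rw [norm_norm, norm_norm, Nat.cast_succ, triangular_add_one, zpow_add₀ hq0, ← Nat.cast_succ,
    zpow_natCast, pow_succ x]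
  calc ‖q ^ triangular n * q ^ (n + 1) * (x ^ n * x)‖
      = ‖q ^ (n + 1) * x‖ * ‖q ^ triangular n * x ^ n‖ := by
        rw [← norm_mul]
        ring_nf
    _ ≤ 1 / 2 * ‖q ^ triangular n * x ^ n‖ := by gcongr

lemma summable_norm_zpow_triangular_mul_zpow (hq : ‖q‖ < 1) (hq0 : q ≠ 0) (z : 𝕜) :
    Summable fun j : ℤ ↦ ‖q ^ triangular j * z ^ j‖ := by
  refine .of_nat_of_neg_add_one
    (by simpa only [zpow_natCast] using summable_norm_zpow_triangular_mul_pow hq hq0 z) ?_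
  refine ((summable_norm_zpow_triangular_mul_pow hq hq0 z⁻¹).mul_right ‖z⁻¹‖).congr fun n ↦ ?_
  rw [triangular_neg_add_one, zpow_neg, ← inv_zpow, ← Nat.cast_succ, zpow_natCast, pow_succ,
    ← norm_mul, mul_assoc]

end TriangularSeries

section JacobiTripleProduct

variable {q z : ℂ}

/-- The Gaussian binomial coefficient `[2n choose n + j]_q`, equal to `0` unless `|j| ≤ n`. -/
noncomputable def centralQBinom (q : ℂ) (n : ℕ) (j : ℤ) : ℂ :=
  qPoch q q (2 * n) * invQFactorial q (n - j) * invQFactorial q (n + j)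

lemma centralQBinom_zero_zero (q : ℂ) : centralQBinom q 0 0 = 1 := by
  simp [centralQBinom, invQFactorial, qPoch]

lemma centralQBinom_zero_of_ne_zero (q : ℂ) {j : ℤ} (hj : j ≠ 0) : centralQBinom q 0 j = 0 := by
  rcases hj.lt_or_gt with hj | hj <;> simp [centralQBinom, invQFactorial, hj]

lemma centralQBinom_succ (hq : ‖q‖ < 1) (hq0 : q ≠ 0) (n : ℕ) (j : ℤ) :
    centralQBinom q (n + 1) j = (1 + q ^ (2 * n + 1)) * centralQBinom q n j +
      q ^ (n + 1 - j) * centralQBinom q n (j - 1) +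
      q ^ (n + 1 + j) * centralQBinom q n (j + 1) := by
  set k := (n : ℤ) + 1 - j
  set l := (n : ℤ) + 1 + j
  have hkl : q ^ k * q ^ l = q * q ^ (2 * n + 1) := by
    rw [← zpow_add₀ hq0, ← pow_succ', ← zpow_natCast]
    congr 1
    lia
  have hsucc : centralQBinom q (n + 1) j =
      qPoch q q (2 * n) * (1 - q ^ (2 * n + 1)) * (1 - q * q ^ (2 * n + 1)) *
        invQFactorial q k * invQFactorial q l := by
    rw [centralQBinom, mul_add_one, qPoch_self_succ, qPoch_self_succ, ← pow_succ', Nat.cast_succ]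
  have hsame : centralQBinom q n j =
      qPoch q q (2 * n) * invQFactorial q (k - 1) * invQFactorial q (l - 1) := by
    rw [centralQBinom, show (n : ℤ) - j = k - 1 by lia, show (n : ℤ) + j = l - 1 by lia]
  have hpred : centralQBinom q n (j - 1) =
      qPoch q q (2 * n) * invQFactorial q k * invQFactorial q (l - 1 - 1) := by
    rw [centralQBinom, show (n : ℤ) - (j - 1) = k by lia, show n + (j - 1) = l - 1 - 1 by lia]
  have hnext : centralQBinom q n (j + 1) =
      qPoch q q (2 * n) * invQFactorial q (k - 1 - 1) * invQFactorial q l := by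
    rw [centralQBinom, show (n : ℤ) - (j + 1) = k - 1 - 1 by lia, show n + (j + 1) = l by lia]
  simp only [hsucc, hsame, hpred, hnext, invQFactorial_sub_one hq, zpow_sub_one₀ hq0]
  rw [eq_div_of_mul_eq hq0 ((mul_comm _ q).trans hkl.symm)]
  field_simp
  ring

lemma centralQBinom_succ_mul_zpow (hq : ‖q‖ < 1) (hq0 : q ≠ 0) (hz : z ≠ 0) (n : ℕ) (j : ℤ) :
    centralQBinom q (n + 1) j * (q ^ triangular j * z ^ j) =
      (1 + q ^ (2 * n + 1)) * (centralQBinom q n j * (q ^ triangular j * z ^ j)) +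
      z * q ^ (n + 1) * (centralQBinom q n (j - 1) * (q ^ triangular (j - 1) * z ^ (j - 1))) +
      z⁻¹ * q ^ n * (centralQBinom q n (j + 1) * (q ^ triangular (j + 1) * z ^ (j + 1))) := by
  have hTpred : q ^ triangular j = q ^ triangular (j - 1) * q ^ j := by
    rw [← zpow_add₀ hq0, ← sub_add_cancel j 1, triangular_add_one, add_sub_cancel_right]
  have hTnext : q ^ triangular (j + 1) = q ^ triangular j * (q ^ j * q) := by
    rw [triangular_add_one, zpow_add₀ hq0, zpow_add_one₀ hq0]
  have hqpred : q ^ ((n : ℤ) + 1 - j) = q ^ (n + 1) / q ^ j := by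
    rw [zpow_sub₀ hq0, ← Nat.cast_succ, zpow_natCast]
  have hqnext : q ^ ((n : ℤ) + 1 + j) = q ^ (n + 1) * q ^ j := by
    rw [zpow_add₀ hq0, ← Nat.cast_succ, zpow_natCast]
  have hqj := zpow_ne_zero j hq0
  rw [centralQBinom_succ hq hq0, hqpred, hqnext, hTnext, hTpred, zpow_add_one₀ hz,
    zpow_sub_one₀ hz]
  field_simp
  ring

theorem hasSum_finite_jacobi_triple_product (hq : ‖q‖ < 1) (hq0 : q ≠ 0) (hz : z ≠ 0) (n : ℕ) :
    HasSum (fun j : ℤ ↦ centralQBinom q n j * (q ^ triangular j * z ^ j))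
      (qPoch (-(z * q)) q n * qPoch (-z⁻¹) q n) := by
  induction n with
  | zero =>
    have hsingle := hasSum_single (f := fun j ↦ centralQBinom q 0 j * (q ^ triangular j * z ^ j)) 0
      fun j hj ↦ by rw [centralQBinom_zero_of_ne_zero q hj, zero_mul]
    simpa [centralQBinom_zero_zero, qPoch, triangular] using hsingle
  | succ n ih =>
    have hsame := ih.mul_left (1 + q ^ (2 * n + 1))
    have hpred := ((Equiv.subRight (1 : ℤ)).hasSum_iff.2 ih).mul_left (z * q ^ (n + 1))
    have hnext := ((Equiv.addRight (1 : ℤ)).hasSum_iff.2 ih).mul_left (z⁻¹ * q ^ n)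
    have hsum := (hsame.add hpred).add hnext
    convert! hsum.congr_fun (centralQBinom_succ_mul_zpow hq hq0 hz n) using 1
    rw [qPoch_succ, qPoch_succ]
    field_simp
    ring

lemma tendsto_centralQBinom (hq : ‖q‖ < 1) (j : ℤ) :
    Tendsto (fun n ↦ centralQBinom q n j) atTop (𝓝 (qPochInf q q)⁻¹) := by
  have hdouble : Tendsto (fun n : ℕ ↦ 2 * n) atTop atTop :=
    tendsto_id.const_mul_atTop' two_pos
  have hsub : Tendsto (fun n : ℕ ↦ (n : ℤ) - j) atTop atTop :=
    tendsto_atTop_add_const_right _ (-j) tendsto_natCast_atTop_atTop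
  have hadd : Tendsto (fun n : ℕ ↦ (n : ℤ) + j) atTop atTop :=
    tendsto_atTop_add_const_right _ j tendsto_natCast_atTop_atTop
  have hlimit := (((tendsto_qPoch q hq).comp hdouble).mul
    ((tendsto_invQFactorial hq).comp hsub)).mul ((tendsto_invQFactorial hq).comp hadd)
  rwa [mul_inv_cancel₀ (qPochInf_self_ne_zero hq), one_mul] at hlimit

lemma exists_norm_centralQBinom_le (hq : ‖q‖ < 1) : ∃ C, ∀ n j, ‖centralQBinom q n j‖ ≤ C := by
  obtain ⟨C, hC⟩ := exists_norm_invQFactorial_le hq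
  obtain ⟨D, hD⟩ := (tendsto_qPoch q hq).norm.bddAbove_range
  have hD' (n : ℕ) : ‖qPoch q q n‖ ≤ D := hD ⟨n, rfl⟩
  have hC0 : 0 ≤ C := (norm_nonneg _).trans (hC 0)
  have hD0 : 0 ≤ D := (norm_nonneg _).trans (hD' 0)
  refine ⟨D * C * C, fun n j ↦ ?_⟩
  rw [centralQBinom, norm_mul, norm_mul]
  gcongr
  exacts [hD' _, hC _, hC _]

theorem hasSum_jacobi_triple_product (hq : ‖q‖ < 1) (hq0 : q ≠ 0) (hz : z ≠ 0) :
    HasSum (fun j : ℤ ↦ q ^ triangular j * z ^ j)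
      (qPochInf q q * (qPochInf (-(z * q)) q * qPochInf (-z⁻¹) q)) := by
  obtain ⟨C, hC⟩ := exists_norm_centralQBinom_le hq
  have hsummable := summable_norm_zpow_triangular_mul_zpow hq hq0 z
  have hsums : Tendsto (fun n ↦ ∑' j : ℤ, centralQBinom q n j * (q ^ triangular j * z ^ j)) atTop
      (𝓝 (∑' j : ℤ, (qPochInf q q)⁻¹ * (q ^ triangular j * z ^ j))) := by
    refine tendsto_tsum_of_dominated_convergence (hsummable.mul_left C)
      (fun j ↦ (tendsto_centralQBinom hq j).mul_const _) (.of_forall fun n j ↦ ?_)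
    rw [norm_mul]
    gcongr
    exact hC n j
  have hprods := (tendsto_qPoch (-(z * q)) hq).mul (tendsto_qPoch (-z⁻¹) hq)
  have hlimit := tendsto_nhds_unique
    (hsums.congr fun n ↦ (hasSum_finite_jacobi_triple_product hq hq0 hz n).tsum_eq) hprods
  rw [tsum_mul_left, inv_mul_eq_iff_eq_mul₀ (qPochInf_self_ne_zero hq)] at hlimit
  exact hlimit ▸ hsummable.of_norm.hasSum

end JacobiTripleProduct

section ThetaFunctions

variable {q : ℂ}

/-- Ramanujan's theta function `ψ(q) = ∑_{n ≥ 0} q^{n (n + 1) / 2}`. -/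
noncomputable def ramanujanPsi (q : ℂ) : ℂ := ∑' n : ℕ, q ^ triangular n

/-- Ramanujan's theta function `f(q, q²) = ∑_{j ∈ ℤ} q^{j (3 j + 1) / 2}` with the generalised
pentagonal numbers as exponents, written `3 * triangular j - j` to avoid a second division. -/
noncomputable def pentagonalTheta (q : ℂ) : ℂ := ∑' j : ℤ, q ^ (3 * triangular j - j)

lemma summable_zpow_triangular (hq : ‖q‖ < 1) (hq0 : q ≠ 0) :
    Summable fun n : ℕ ↦ q ^ triangular n := by
  simpa only [one_pow, mul_one] using (summable_norm_zpow_triangular_mul_pow hq hq0 1).of_norm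

theorem ramanujanPsi_eq_qPochInf_div (hq : ‖q‖ < 1) (hq0 : q ≠ 0) :
    ramanujanPsi q = qPochInf (q ^ 2) (q ^ 2) ^ 2 / qPochInf q q := by
  have hhalf : HasSum (fun n : ℕ ↦ q ^ triangular n) (ramanujanPsi q) :=
    (summable_zpow_triangular hq hq0).hasSum
  have htwice : HasSum (fun j : ℤ ↦ q ^ triangular j) (ramanujanPsi q + ramanujanPsi q) :=
    .of_nat_of_neg_add_one hhalf (by simpa only [triangular_neg_add_one] using hhalf)
  have hproduct := hasSum_jacobi_triple_product hq hq0 one_ne_zero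
  simp only [one_zpow, mul_one, one_mul, inv_one] at hproduct
  have hneg_one := qPochInf_eq_one_sub_mul (-1) hq
  rw [neg_one_mul] at hneg_one
  rw [← qPochInf_neg_mul_self q hq, eq_div_iff (qPochInf_self_ne_zero hq)]
  linear_combination qPochInf q q / 2 * (htwice.unique hproduct) +
    qPochInf q q ^ 2 * qPochInf (-q) q / 2 * hneg_one

lemma hasSum_pentagonalTheta (hq : ‖q‖ < 1) (hq0 : q ≠ 0) :
    HasSum (fun j : ℤ ↦ q ^ (3 * triangular j - j))
      (qPochInf (q ^ 3) (q ^ 3) * (qPochInf (-q ^ 2) (q ^ 3) * qPochInf (-q) (q ^ 3))) := by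
  have hproduct := hasSum_jacobi_triple_product (norm_pow_lt_one hq three_ne_zero)
    (pow_ne_zero 3 hq0) (inv_ne_zero hq0)
  rw [show q⁻¹ * q ^ 3 = q ^ 2 by field_simp, inv_inv] at hproduct
  refine hproduct.congr_fun fun j ↦ ?_
  rw [zpow_sub₀ hq0, zpow_mul, inv_zpow, div_eq_mul_inv]
  norm_cast

theorem pentagonalTheta_eq_qPochInf_div (hq : ‖q‖ < 1) (hq0 : q ≠ 0) :
    pentagonalTheta q = qPochInf (q ^ 2) (q ^ 2) * qPochInf (q ^ 3) (q ^ 3) ^ 2 /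
      (qPochInf q q * qPochInf (q ^ 6) (q ^ 6)) := by
  have hneg : qPochInf (-q) q =
      qPochInf (-q) (q ^ 3) * qPochInf (-q ^ 2) (q ^ 3) * qPochInf (-q ^ 3) (q ^ 3) := by
    rw [qPochInf_eq_prod (-q) hq three_ne_zero]
    simp only [Finset.prod_range_succ, Finset.prod_range_zero, one_mul]
    ring_nf
  have hsq := qPochInf_neg_mul_self q hq
  have hsq_cube := qPochInf_neg_mul_self (q ^ 3) (norm_pow_lt_one hq three_ne_zero)
  rw [← pow_mul] at hsq_cube
  have hq6 := qPochInf_pow_self_ne_zero hq (n := 6) (by norm_num)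
  rw [pentagonalTheta, (hasSum_pentagonalTheta hq hq0).tsum_eq,
    eq_div_iff (mul_ne_zero (qPochInf_self_ne_zero hq) hq6), ← hsq_cube, ← hsq, hneg]
  ring

theorem ramanujanPsi_dissection (hq : ‖q‖ < 1) (hq0 : q ≠ 0) :
    ramanujanPsi q = pentagonalTheta (q ^ 3) + q * ramanujanPsi (q ^ 9) := by
  have hresidues : ramanujanPsi q = ∑' n : ℕ, q ^ triangular (3 * n) +
      ∑' n : ℕ, q ^ triangular (1 + 3 * n) + ∑' n : ℕ, q ^ triangular (2 + 3 * n) := by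
    rw [ramanujanPsi, Nat.sumByResidueClasses (summable_zpow_triangular hq hq0) 3]
    refine (Fin.sum_univ_three fun i ↦ ∑' n : ℕ, q ^ triangular (i.val + 3 * n : ℕ)).trans ?_
    simp
  have hone : ∑' n : ℕ, q ^ triangular (1 + 3 * n) = q * ramanujanPsi (q ^ 9) := by
    rw [ramanujanPsi, ← tsum_mul_left]
    refine tsum_congr fun n ↦ ?_
    rw [triangular_one_add_three_mul, zpow_one_add₀ hq0, zpow_mul]
    norm_cast
  have hzero_two : pentagonalTheta (q ^ 3) =
      ∑' n : ℕ, q ^ triangular (3 * n) + ∑' n : ℕ, q ^ triangular (2 + 3 * n) := by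
    have hpow (j : ℤ) : (q ^ 3) ^ j = q ^ (3 * j) := by
      rw [zpow_mul]
      norm_cast
    have hsummable := (hasSum_pentagonalTheta (norm_pow_lt_one hq three_ne_zero)
      (pow_ne_zero 3 hq0)).summable
    simp only [hpow] at hsummable
    simp only [pentagonalTheta, hpow, triangular_three_mul, triangular_two_add_three_mul]
    exact tsum_of_nat_of_neg_add_one (hsummable.comp_injective Nat.cast_injective)
      (hsummable.comp_injective fun m n h ↦ by simpa using h)
  rw [hresidues, hone, hzero_two]
  ring

end ThetaFunctions

section Dissection

variable {q : ℂ}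

lemma M2crank_genFun_eq_ramanujanPsi_sq_div (hq : ‖q‖ < 1) (hq0 : q ≠ 0) :
    qPochInf (q ^ 2) (q ^ 2) ^ 2 / (qPochInf q (q ^ 2) ^ 2 * qPochInf (q ^ 6) (q ^ 6)) =
      ramanujanPsi q ^ 2 / qPochInf (q ^ 6) (q ^ 6) := by
  have hodd : qPochInf q q = qPochInf q (q ^ 2) * qPochInf (q ^ 2) (q ^ 2) := by
    rw [qPochInf_eq_prod q hq two_ne_zero, Finset.prod_range_succ, Finset.prod_range_one, pow_zero,
      mul_one, pow_one, ← sq]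
  have hq1 := qPochInf_self_ne_zero hq
  have hq2 := qPochInf_pow_self_ne_zero hq two_ne_zero
  rw [ramanujanPsi_eq_qPochInf_div hq hq0, eq_div_of_mul_eq hq2 hodd.symm]
  field_simp

lemma M2bar0_eq_pentagonalTheta_sq_div (hq : ‖q‖ < 1) (hq0 : q ≠ 0) :
    M2bar0 q = pentagonalTheta q ^ 2 / qPochInf (q ^ 2) (q ^ 2) := by
  have hq1 := qPochInf_self_ne_zero hq
  have hq2 := qPochInf_pow_self_ne_zero hq two_ne_zero
  have hq3 := qPochInf_pow_self_ne_zero hq three_ne_zero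
  have hsq := qPochInf_neg_mul_self q hq
  have hsq_cube := qPochInf_neg_mul_self (q ^ 3) (norm_pow_lt_one hq three_ne_zero)
  rw [← pow_mul] at hsq_cube
  rw [pentagonalTheta_eq_qPochInf_div hq hq0, M2bar0,
    eq_div_of_mul_eq hq1 hsq, eq_div_of_mul_eq hq3 hsq_cube]
  field_simp

lemma M2bar1_eq_pentagonalTheta_mul_ramanujanPsi_div (hq : ‖q‖ < 1) (hq0 : q ≠ 0) :
    M2bar1 q = 2 * pentagonalTheta q * ramanujanPsi (q ^ 3) / qPochInf (q ^ 2) (q ^ 2) := by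
  have hq2 := qPochInf_pow_self_ne_zero hq two_ne_zero
  have hq3 := qPochInf_pow_self_ne_zero hq three_ne_zero
  have hq6 := qPochInf_pow_self_ne_zero hq (n := 6) (by norm_num)
  rw [pentagonalTheta_eq_qPochInf_div hq hq0, M2bar1,
    ramanujanPsi_eq_qPochInf_div (norm_pow_lt_one hq three_ne_zero) (pow_ne_zero 3 hq0), ← pow_mul]
  field_simp

lemma M2bar2_eq_ramanujanPsi_sq_div (hq : ‖q‖ < 1) (hq0 : q ≠ 0) :
    M2bar2 q = ramanujanPsi (q ^ 3) ^ 2 / qPochInf (q ^ 2) (q ^ 2) := by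
  rw [M2bar2, ramanujanPsi_eq_qPochInf_div (norm_pow_lt_one hq three_ne_zero) (pow_ne_zero 3 hq0),
    ← pow_mul]
  field_simp

end Dissection

/-- 3-dissection of the residual M2-crank generating function at a cube root of unity. -/
theorem M2crank_dissection (q : ℂ) (hq : ‖q‖ < 1) :
    qPochInf (q ^ 2) (q ^ 2) ^ 2 /
        (qPochInf q (q ^ 2) ^ 2 * qPochInf (q ^ 6) (q ^ 6)) =
      M2bar0 (q ^ 3) + q * M2bar1 (q ^ 3) + q ^ 2 * M2bar2 (q ^ 3) := by
  rcases eq_or_ne q 0 with rfl | hq0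
  · simp [M2bar0, qPochInf]
  have hq3 := norm_pow_lt_one hq three_ne_zero
  have hq30 := pow_ne_zero 3 hq0
  rw [M2crank_genFun_eq_ramanujanPsi_sq_div hq hq0, ramanujanPsi_dissection hq hq0,
    M2bar0_eq_pentagonalTheta_sq_div hq3 hq30,
    M2bar1_eq_pentagonalTheta_mul_ramanujanPsi_div hq3 hq30,
    M2bar2_eq_ramanujanPsi_sq_div hq3 hq30, ← pow_mul, ← pow_mul]
  ring
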